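/- For every k ≥ 0, a word u of length F_k over {0,1} is a factor of the infinite Fibonacci word w if and only if u is one of the F_k (mutually distinct) cyclic rotations of s_k, or u equals the word b_k obtained by prepending the flip of the last letter of s_k to the first F_k − 1 letters of s_k; in particular the set of factors of w of length F_k has exactly F_k + 1 elements. -/

import Mathlib

/-- The Fibonacci substitution `S` on the alphabet `{0,1}` (encoded as `Bool`,
with `false` for `0` and `true` for `1`): `S(0) = 1`, `S(1) = 10`. -/
def fibS : Bool → List Bool
  | false => [true]
  | true => [true, false]

/-- The Fibonacci words `s_k = S^k(1)`; the word `s_k` has length `F_k = Nat.fib (k + 2)`. -/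
def fibWord : ℕ → List Bool
  | 0 => [true]
  | k + 1 => (fibWord k).flatMap fibS

/-- The word `b_k`, obtained by prepending the flip of the last letter of `s_k`
to the first `F_k - 1` letters of `s_k`. -/
def fibB (k : ℕ) : List Bool := (!((fibWord k).getLastD false)) :: (fibWord k).dropLast

/-!
Write `t_k = S^k(0)`, so that `s_{k+1} = s_k t_k` and `t_{k+1} = s_k`. The word `w = S^{k+1}(w)` is
a concatenation of blocks `S^{k+1}(1) = s_k t_k` and `S^{k+1}(0) = s_k`, each followed by `s_k`, so
a factor of length `F_k` lies in `s_k s_k` or in `s_k t_k s_k`. The words `s_k t_k` and `t_k s_k`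
agree up to their last two letters, and hence `s_k t_k s_k` without its last two letters is a prefix
of `s_k s_k s_k`, where only rotations of `s_k` are seen. The two remaining windows of `s_k t_k s_k`
are `s_k` and `b_k`.

The rotations are distinct because two words `p`, `q` with `pq = qp` have the same letter
frequencies, whereas `s_k` contains the letter `1` exactly `F_{k-1}` times, a number coprime to its
length `F_k`. The word `b_k` is not a rotation, since it does not have the letter counts of `s_k`.
-/

section Rotation

variable {α : Type*} {l u : List α}

theorem infix_or_infix_append_of_prefix {g p r : List α} (hu : u.length ≤ p.length) (hp : p <+: r)
    (h : u <:+: g ++ r) : u <:+: r ∨ u <:+: g ++ p := by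
  rcases List.infix_append_iff.1 h with hg | hr | ⟨a, b, rfl, ha, hb⟩
  · exact .inr (List.infix_append_of_infix_left hg)
  · exact .inl hr
  · have hbp : b <+: p :=
      List.prefix_of_prefix_length_le hb hp (by rw [List.length_append] at hu; omega)
    exact .inr (List.infix_append_iff.2 (.inr (.inr ⟨a, b, rfl, ha, hbp⟩)))

theorem isRotated_iff_infix_append_self : l ~r u ↔ u.length = l.length ∧ u <:+: l ++ l := by
  constructor
  · rintro ⟨n, rfl⟩
    refine ⟨List.length_rotate .., l.take (n % l.length), l.drop (n % l.length), ?_⟩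
    rw [List.rotate_eq_drop_append_take_mod, ← List.append_assoc, List.take_append_drop,
      List.append_assoc, List.take_append_drop]
  · rintro ⟨hu, h⟩
    rcases List.infix_append_iff.1 h with h | h | ⟨a, b, rfl, ⟨c, hc⟩, ⟨d, hd⟩⟩
    · rw [h.eq_of_length hu]
    · rw [h.eq_of_length hu]
    · have hlen : c.length = b.length := by
        rw [← hc, List.length_append, List.length_append] at hu
        omega
      obtain ⟨rfl, -⟩ := List.append_inj (hc.trans hd.symm) hlen
      exact hc ▸ List.isRotated_append

theorem isRotated_of_infix_append_append_self (hu : u.length = l.length)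
    (h : u <:+: l ++ (l ++ l)) : l ~r u :=
  isRotated_iff_infix_append_self.2 ⟨hu,
    (infix_or_infix_append_of_prefix hu.le (List.prefix_append l l) h).elim id id⟩

theorem isRotated_iff_exists_lt_length (hl : l ≠ []) :
    l ~r u ↔ ∃ i < l.length, u = l.rotate i := by
  constructor
  · rintro ⟨n, rfl⟩
    exact ⟨n % l.length, Nat.mod_lt _ (List.length_pos_iff.2 hl), (List.rotate_mod l n).symm⟩
  · rintro ⟨i, -, rfl⟩
    exact ⟨i, rfl⟩

theorem finite_setOf_isRotated (l : List α) : {u | l ~r u}.Finite :=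
  l.cyclicPermutations.finite_toSet.subset fun _ h ↦ List.mem_cyclicPermutations_iff.2 h.symm

variable [DecidableEq α]

-- In the free monoid `p ^ |q|` and `q ^ |p|` commute and have the same length, so they are equal.
theorem length_mul_count_eq_of_append_comm {p q : List α} (h : p ++ q = q ++ p) (a : α) :
    p.length * q.count a = q.length * p.count a := by
  let P := FreeAddMonoid.ofList p
  let Q := FreeAddMonoid.ofList q
  have hcomm : AddCommute (q.length • P) (p.length • Q) :=
    AddCommute.nsmul_nsmul (show AddCommute P Q from h) _ _
  have length_nsmul (n : ℕ) (x : FreeAddMonoid α) :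
      (n • x).toList.length = n * x.toList.length := by
    simpa [FreeAddMonoid.countP_apply] using map_nsmul (FreeAddMonoid.countP fun _ : α ↦ True) n x
  have hpow : q.length • P = p.length • Q :=
    (List.append_inj hcomm.eq
      ((length_nsmul _ _).trans ((mul_comm _ _).trans (length_nsmul _ _).symm))).1
  simpa only [P, Q, map_nsmul, smul_eq_mul, FreeAddMonoid.count_apply, FreeAddMonoid.toList_ofList]
    using congrArg (FreeAddMonoid.count a) hpow.symm

theorem length_dvd_mul_count_of_rotate_eq_self {d : ℕ} (hd : d ≤ l.length) (h : l.rotate d = l)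
    (a : α) : l.length ∣ d * l.count a := by
  obtain ⟨p, q, rfl, rfl⟩ : ∃ p q, l = p ++ q ∧ d = p.length :=
    ⟨l.take d, l.drop d, (List.take_append_drop d l).symm, (List.length_take_of_le hd).symm⟩
  rw [List.rotate_append_length_eq] at h
  refine ⟨p.count a, ?_⟩
  rw [List.count_append, List.length_append, mul_add, add_mul,
    length_mul_count_eq_of_append_comm h.symm]

theorem rotate_injOn_of_coprime_count {a : α} (hl : l.length.Coprime (l.count a)) :
    Set.InjOn l.rotate (Set.Iio l.length) := by
  intro i hi j hj hij
  wlog hle : i ≤ j generalizing i j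
  · exact (this hj hi hij.symm (Nat.le_of_not_le hle)).symm
  have hlt : j - i < l.length := (Nat.sub_le j i).trans_lt hj
  have hfix : l.rotate (j - i) = l := by
    rw [← List.rotate_eq_rotate (n := i), List.rotate_rotate, Nat.sub_add_cancel hle, hij]
  have hdvd : l.length ∣ j - i :=
    hl.dvd_of_dvd_mul_right (length_dvd_mul_count_of_rotate_eq_self hlt.le hfix a)
  have := Nat.eq_zero_of_dvd_of_lt hdvd hlt
  omega

theorem ncard_setOf_isRotated_of_coprime_count {a : α} (hl : l.length.Coprime (l.count a)) :
    {u | l ~r u}.ncard = l.length := by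
  have hne : l ≠ [] := by
    rintro rfl
    simp at hl
  have himage : {u | l ~r u} = l.rotate '' Set.Iio l.length := by
    ext u
    simp [isRotated_iff_exists_lt_length hne, eq_comm]
  rw [himage, (rotate_injOn_of_coprime_count hl).ncard_image, Set.ncard_Iio_nat]

end Rotation

/-- The iterated substitution `S^k` on finite words. In particular `fibPow k [false]` is the word
`t_k = S^k(0)`, with `t_0 = 0` and `t_{k+1} = s_k`. -/
def fibPow (k : ℕ) (x : List Bool) : List Bool := (List.flatMap fibS)^[k] x

theorem fibPow_nil (k : ℕ) : fibPow k [] = [] := Function.iterate_fixed rfl k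

theorem fibPow_append (k : ℕ) (x y : List Bool) : fibPow k (x ++ y) = fibPow k x ++ fibPow k y := by
  induction k generalizing x y with
  | zero => rfl
  | succ k ih =>
    simp only [fibPow, Function.iterate_succ_apply, List.flatMap_append] at ih ⊢
    exact ih _ _

theorem fibPow_cons (k : ℕ) (c : Bool) (x : List Bool) :
    fibPow k (c :: x) = fibPow k [c] ++ fibPow k x :=
  fibPow_append k [c] x

theorem fibPow_true (k : ℕ) : fibPow k [true] = fibWord k := by
  induction k with
  | zero => rfl
  | succ k ih => rw [fibPow, Function.iterate_succ_apply', ← fibPow, ih, fibWord]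

theorem fibPow_succ_false (k : ℕ) : fibPow (k + 1) [false] = fibWord k := fibPow_true k

theorem fibPow_fibWord (k m : ℕ) : fibPow k (fibWord m) = fibWord (k + m) := by
  rw [← fibPow_true, ← fibPow_true, fibPow, fibPow, fibPow, Function.iterate_add_apply]

theorem fibPow_infix (k : ℕ) {x y : List Bool} (h : x <:+: y) : fibPow k x <:+: fibPow k y := by
  obtain ⟨p, s, rfl⟩ := h
  exact ⟨fibPow k p, fibPow k s, by simp only [fibPow_append]⟩

theorem fibWord_succ (k : ℕ) : fibWord (k + 1) = fibWord k ++ fibPow k [false] := by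
  rw [← fibPow_fibWord k 1, ← fibPow_true k, ← fibPow_append]
  rfl

theorem fibWord_add_two (k : ℕ) : fibWord (k + 2) = fibWord (k + 1) ++ fibWord k := by
  rw [fibWord_succ, fibPow_succ_false]

theorem length_fibWord : ∀ k, (fibWord k).length = Nat.fib (k + 2)
  | 0 => rfl
  | 1 => rfl
  | k + 2 => by
    rw [fibWord_add_two, List.length_append, length_fibWord k, length_fibWord (k + 1),
      Nat.fib_add_two (n := k + 2), add_comm]

theorem count_true_fibWord : ∀ k, (fibWord k).count true = Nat.fib (k + 1)
  | 0 => rfl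
  | 1 => rfl
  | k + 2 => by
    rw [fibWord_add_two, List.count_append, count_true_fibWord k, count_true_fibWord (k + 1),
      Nat.fib_add_two (n := k + 1), add_comm]

theorem fibWord_ne_nil (k : ℕ) : fibWord k ≠ [] := by
  rw [← List.length_pos_iff, length_fibWord]
  exact Nat.fib_pos.2 (by omega)

theorem coprime_length_count_true_fibWord (k : ℕ) :
    (fibWord k).length.Coprime ((fibWord k).count true) := by
  rw [length_fibWord, count_true_fibWord]
  exact (Nat.fib_coprime_fib_succ (k + 1)).symm

theorem fibWord_prefix_add (m k : ℕ) : fibWord m <+: fibWord (m + k) := by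
  induction k with
  | zero => exact List.prefix_rfl
  | succ k ih => exact ih.trans (fibWord_succ (m + k) ▸ List.prefix_append _ _)

theorem fibWord_prefix_fibPow_succ_append (k : ℕ) (x : List Bool) :
    fibWord k <+: fibPow (k + 1) x ++ fibWord k := by
  rcases x with - | ⟨- | -, x⟩
  · rw [fibPow_nil, List.nil_append]
  · rw [fibPow_cons, fibPow_succ_false, List.append_assoc]
    exact List.prefix_append _ _
  · rw [fibPow_cons, fibPow_true, fibWord_succ, List.append_assoc, List.append_assoc]
    exact List.prefix_append _ _

theorem infix_of_infix_fibPow_succ_append {k : ℕ} {u x : List Bool}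
    (hu : u.length ≤ (fibWord k).length) (h : u <:+: fibPow (k + 1) x ++ fibWord k) :
    u <:+: fibWord k ++ fibWord k ∨ u <:+: fibWord k ++ (fibPow k [false] ++ fibWord k) := by
  induction x with
  | nil =>
    rw [fibPow_nil, List.nil_append] at h
    exact .inl (List.infix_append_of_infix_left h)
  | cons c x ih =>
    rw [fibPow_cons, List.append_assoc] at h
    rcases infix_or_infix_append_of_prefix hu (fibWord_prefix_fibPow_succ_append k x) h with
      htail | hblock
    · exact ih htail
    · cases c
      · rw [fibPow_succ_false] at hblock
        exact .inl hblock
      · rw [fibPow_true, fibWord_succ, List.append_assoc] at hblock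
        exact .inr hblock

theorem exists_fibWord_fibPow_false_near_comm (k : ℕ) : ∃ P x y,
    fibWord k ++ fibPow k [false] = P ++ [x, y] ∧
      fibPow k [false] ++ fibWord k = P ++ [y, x] := by
  induction k with
  | zero => exact ⟨[], true, false, rfl, rfl⟩
  | succ k ih =>
    obtain ⟨P, x, y, hst, hts⟩ := ih
    refine ⟨fibWord k ++ P, y, x, ?_, ?_⟩
    · rw [fibPow_succ_false, fibWord_succ, List.append_assoc, hts, List.append_assoc]
    · rw [fibPow_succ_false, fibWord_succ, hst, List.append_assoc]

theorem exists_fibPow_false_append_fibWord_prefix (k : ℕ) : ∃ P x y,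
    fibPow k [false] ++ fibWord k = P ++ [x, y] ∧ P <+: fibWord k ++ fibWord k := by
  rcases k with - | k
  · exact ⟨[], false, true, rfl, List.nil_prefix⟩
  · obtain ⟨P, x, y, hst, hts⟩ := exists_fibWord_fibPow_false_near_comm k
    refine ⟨fibWord k ++ P, x, y, ?_, [y, x] ++ fibPow k [false], ?_⟩
    · rw [fibPow_succ_false, fibWord_succ, hst, List.append_assoc]
    · calc fibWord k ++ P ++ ([y, x] ++ fibPow k [false])
          = fibWord k ++ (P ++ [y, x]) ++ fibPow k [false] := by simp only [List.append_assoc]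
        _ = fibWord (k + 1) ++ fibWord (k + 1) := by
          rw [← hts, fibWord_succ]; simp only [List.append_assoc]

theorem exists_fibWord_eq_concat (k : ℕ) : ∃ A B x,
    fibWord k = A ++ [x] ∧ fibPow k [false] = B ++ [!x] := by
  induction k with
  | zero => exact ⟨[], [], true, rfl, rfl⟩
  | succ k ih =>
    obtain ⟨A, B, x, hs, ht⟩ := ih
    refine ⟨fibWord k ++ B, A, !x, ?_, ?_⟩
    · rw [fibWord_succ, ht, List.append_assoc]
    · rw [fibPow_succ_false, Bool.not_not, hs]

theorem fibB_eq_cons {k : ℕ} {A : List Bool} {x : Bool} (h : fibWord k = A ++ [x]) :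
    fibB k = (!x) :: A := by
  simp [fibB, h]

theorem exists_fibPow_false_append_fibWord_eq_fibB_concat (k : ℕ) : ∃ B x,
    fibPow k [false] ++ fibWord k = B ++ fibB k ++ [x] := by
  obtain ⟨A, B, x, hs, ht⟩ := exists_fibWord_eq_concat k
  exact ⟨B, x, by simp [fibB_eq_cons hs, hs, ht]⟩

theorem length_fibB (k : ℕ) : (fibB k).length = (fibWord k).length := by
  obtain ⟨A, B, x, hs, -⟩ := exists_fibWord_eq_concat k
  simp [fibB_eq_cons hs, hs]

theorem not_isRotated_fibB (k : ℕ) : ¬ fibWord k ~r fibB k := by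
  intro h
  obtain ⟨A, B, x, hs, -⟩ := exists_fibWord_eq_concat k
  have hcount := h.perm.count_eq true
  rw [fibB_eq_cons hs, hs] at hcount
  cases x <;> simp at hcount

theorem isRotated_or_eq_fibB_of_infix {k : ℕ} {u : List Bool}
    (hu : u.length = (fibWord k).length)
    (h : u <:+: fibWord k ++ (fibPow k [false] ++ fibWord k)) : fibWord k ~r u ∨ u = fibB k := by
  obtain ⟨P, x, y, hP, hPs⟩ := exists_fibPow_false_append_fibWord_prefix k
  obtain ⟨B, z, hB⟩ := exists_fibPow_false_append_fibWord_eq_fibB_concat k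
  have eq_of_suffix {v r : List Bool} (hv : v.length = (fibWord k).length) (h₁ : u <:+ r)
      (h₂ : v <:+ r) : u = v :=
    (List.suffix_of_suffix_length_le h₁ h₂ (hu.trans hv.symm).le).eq_of_length (hu.trans hv.symm)
  have hfibB : fibB k <:+ fibWord k ++ P ++ [x] := by
    have hPB : P ++ [x] ++ [y] = B ++ fibB k ++ [z] := by
      rw [← hB, hP, List.append_assoc, List.singleton_append]
    rw [List.append_assoc, (List.append_inj' hPB rfl).1, ← List.append_assoc]
    exact List.suffix_append _ _
  have hsplit : fibWord k ++ (fibPow k [false] ++ fibWord k) = fibWord k ++ P ++ [x] ++ [y] := by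
    simp [hP]
  rw [hsplit, List.infix_concat_iff, List.infix_concat_iff] at h
  rcases h with hlast | hpenult | hinit
  · left
    rw [← hsplit, ← List.append_assoc] at hlast
    rw [eq_of_suffix rfl hlast (List.suffix_append _ _)]
  · exact .inr (eq_of_suffix (length_fibB k) hpenult hfibB)
  · exact .inl (isRotated_of_infix_append_append_self hu
      (hinit.trans ((List.prefix_append_right_inj _).2 hPs).isInfix))

theorem infix_fibWord_of_isRotated {k : ℕ} {u : List Bool} (h : fibWord k ~r u) :
    u <:+: fibWord (k + 3) := by
  have hss : fibWord k ++ fibWord k = fibPow k [true, true] := by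
    rw [← List.singleton_append, fibPow_append, fibPow_true]
  refine (isRotated_iff_infix_append_self.1 h).2.trans ?_
  rw [hss, ← fibPow_fibWord]
  exact fibPow_infix k (by decide)

theorem fibB_infix_fibWord (k : ℕ) : fibB k <:+: fibWord (k + 2) := by
  obtain ⟨B, x, hB⟩ := exists_fibPow_false_append_fibWord_eq_fibB_concat k
  rw [fibWord_add_two, fibWord_succ, List.append_assoc, hB]
  exact ⟨fibWord k ++ B, [x], by simp only [List.append_assoc]⟩

theorem exists_infix_fibWord_iff {k : ℕ} {u : List Bool} (hu : u.length = (fibWord k).length) :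
    (∃ m, u <:+: fibWord m) ↔ fibWord k ~r u ∨ u = fibB k := by
  constructor
  · rintro ⟨m, hm⟩
    have hblocks : u <:+: fibPow (k + 1) (fibWord m) ++ fibWord k := by
      rw [fibPow_fibWord, add_comm]
      exact List.infix_append_of_infix_left (hm.trans (fibWord_prefix_add m (k + 1)).isInfix)
    rcases infix_of_infix_fibPow_succ_append hu.le hblocks with h | h
    · exact .inl (isRotated_iff_infix_append_self.2 ⟨hu, h⟩)
    · exact isRotated_or_eq_fibB_of_infix hu h
  · rintro (h | rfl)
    · exact ⟨k + 3, infix_fibWord_of_isRotated h⟩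
    · exact ⟨k + 2, fibB_infix_fibWord k⟩

theorem setOf_infix_fibWord_eq_insert (k : ℕ) :
    {u | u.length = (fibWord k).length ∧ ∃ m, u <:+: fibWord m}
      = insert (fibB k) {u | fibWord k ~r u} := by
  ext u
  constructor
  · rintro ⟨hu, hm⟩
    exact ((exists_infix_fibWord_iff hu).1 hm).symm
  · intro h
    have hu : u.length = (fibWord k).length := by
      rcases h with rfl | h
      · exact length_fibB k
      · exact h.perm.length_eq.symm
    exact ⟨hu, (exists_infix_fibWord_iff hu).2 h.symm⟩

/-- For every `k ≥ 0`, a word `u` of length `F_k` over `{0,1}` is a factor of the infinite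
Fibonacci word `w` (i.e. a contiguous subword of some `s_m`) if and only if `u` is one of the
`F_k` cyclic rotations of `s_k` or `u = b_k`; in particular, the set of factors of `w` of
length `F_k` has exactly `F_k + 1` elements.  (Here `F_k = Nat.fib (k + 2)`.) -/
theorem fibWord_factors_of_length_fib (k : ℕ) :
    (∀ u : List Bool, u.length = Nat.fib (k + 2) →
      ((∃ m, u <:+: fibWord m) ↔
        (∃ i < Nat.fib (k + 2), u = (fibWord k).rotate i) ∨ u = fibB k)) ∧
    {u : List Bool | u.length = Nat.fib (k + 2) ∧ ∃ m, u <:+: fibWord m}.ncard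
      = Nat.fib (k + 2) + 1 := by
  simp only [← length_fibWord]
  refine ⟨fun u hu ↦ ?_, ?_⟩
  · rw [← isRotated_iff_exists_lt_length (fibWord_ne_nil k)]
    exact exists_infix_fibWord_iff hu
  · rw [setOf_infix_fibWord_eq_insert,
      Set.ncard_insert_of_notMem (s := {u | fibWord k ~r u}) (not_isRotated_fibB k)
        (finite_setOf_isRotated _),
      ncard_setOf_isRotated_of_coprime_count (coprime_length_count_true_fibWord k)]
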